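/- The combined core-quotient map λ ↦ (core_r(λ), quot_r(λ)) is a bijection from the set of all partitions onto (set of r-cores) × (set of r-tuples of partitions). -/

import Mathlib

/-- A function `ℕ → ℕ` is (the sequence of parts of) a partition. -/
def IsPartitionFun (f : ℕ → ℕ) : Prop :=
  (∀ i j : ℕ, i ≤ j → f j ≤ f i) ∧ ∃ n : ℕ, ∀ i : ℕ, n ≤ i → f i = 0

/-- The number of `0`'s of an edge sequence lying above position `j`. -/
noncomputable def numZerosAbove (b : ℤ → Prop) (j : ℤ) : ℕ :=
  Nat.card {i : ℤ // j < i ∧ ¬ b i}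

/-- The shape of an edge sequence. -/
noncomputable def esShape (b : ℤ → Prop) (k : ℕ) : ℕ :=
  Nat.card {j : ℤ // b j ∧ k + 1 ≤ numZerosAbove b j}

/-- The charge of an edge sequence (the sorted sequence with `1`'s exactly at
positions `≥ m` has charge `-m`). -/
noncomputable def esCharge (b : ℤ → Prop) : ℤ :=
  (Nat.card {i : ℤ // i < 0 ∧ b i} : ℤ) - (Nat.card {i : ℤ // 0 ≤ i ∧ ¬ b i} : ℤ)

/-- The `j`-th part of the conjugate partition of `f` (`j ≥ 1`). -/
noncomputable def conjCount (f : ℕ → ℕ) (j : ℕ) : ℕ :=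
  Nat.card {i : ℕ // j ≤ f i}

/-- The partition `f` has a box of hook length `n`. -/
noncomputable def HasHook (f : ℕ → ℕ) (n : ℕ) : Prop :=
  ∃ a j : ℕ, 1 ≤ j ∧ j ≤ f a ∧ (f a - j) + (conjCount f j - (a + 1)) + 1 = n

/-- The canonical (total charge zero) edge sequence encoding of a partition `f`:
its `1`'s sit at the positions `k - f'_{k+1}` for `k ∈ ℕ`, where `f'` is the conjugate
partition of `f`. -/
def edgeOf (f : ℕ → ℕ) (i : ℤ) : Prop :=
  ∃ k : ℕ, i = (k : ℤ) - (conjCount f (k + 1) : ℤ)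

/-- The `r`-quotient of a partition: the tuple of shapes of the `r` runners of its
edge sequence, `bˢ j = b (r*j + s)`. -/
noncomputable def quotFun (r : ℕ) (f : ℕ → ℕ) (s : Fin r) : ℕ → ℕ :=
  fun k => esShape (fun j : ℤ => edgeOf f (r * j + (s : ℕ))) k

/-- The `r`-core of a partition: push all beads to the left in each runner of the
abacus (i.e. fully sort each runner, keeping its charge) and interleave back; the
core is the shape of the resulting edge sequence. -/
noncomputable def coreFun (r : ℕ) (f : ℕ → ℕ) : ℕ → ℕ :=
  fun k => esShape
    (fun i : ℤ => -(esCharge (fun j : ℤ => edgeOf f (r * j + i.emod r))) ≤ i.ediv r) k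

/-!
An edge sequence is determined by its shape and its charge, and every pair of a partition and an
integer occurs; partitions are thus the edge sequences of charge zero. Splitting into runners is a
bijection from edge sequences to `r`-tuples of edge sequences under which charges add up. Hence a
partition is the same as an `r`-tuple of shapes, its quotient, together with `r` charges of sum
zero, and the core remembers exactly the charges. Removing an `r`-ribbon moves a `0` one step to the
left in its runner, so the `r`-cores are the partitions all of whose runners are sorted.
-/

section

open Filter Set

/-- Edge sequences, read along the boundary of a partition: `0` far to the left and `1` far to the
right. -/
structure IsEdgeSeq (b : ℤ → Prop) : Prop where
  eventually_not : ∀ᶠ i in atBot, ¬ b i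
  eventually : ∀ᶠ i in atTop, b i

/-- The number of `1`'s of an edge sequence strictly to the left of `j`. At a `1` this is the index
of the corresponding column, counted from `0`. -/
noncomputable def onesBelow (b : ℤ → Prop) (j : ℤ) : ℕ := {i | i < j ∧ b i}.ncard

/-- The number of `0`'s of an edge sequence at positions `≥ j`. Unlike in `numZerosAbove`, the
position `j` itself counts, so that this complements `onesBelow`. -/
noncomputable def zerosFrom (b : ℤ → Prop) (j : ℤ) : ℕ := {i | j ≤ i ∧ ¬ b i}.ncard

/-- The position of the `k`-th `1` of `edgeOf f`, counted from `0`. -/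
noncomputable def onePos (f : ℕ → ℕ) (k : ℕ) : ℤ := k - conjCount f (k + 1)

/-- The edge sequence of charge `c` in which all `0`'s precede all `1`'s. -/
def sortedSeq (c j : ℤ) : Prop := -c ≤ j

section Counting

variable {b : ℤ → Prop} {j : ℤ}

theorem finite_setOf_of_eventually_not {P : ℤ → Prop} (hbot : ∀ᶠ i in atBot, ¬ P i)
    (htop : ∀ᶠ i in atTop, ¬ P i) : {i | P i}.Finite := by
  have hcofinite : ∀ᶠ i in cofinite, ¬ P i := by
    rw [Int.cofinite_eq]
    exact eventually_sup.2 ⟨hbot, htop⟩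
  simpa only [eventually_cofinite, not_not] using hcofinite

theorem esCharge_eq (b : ℤ → Prop) : esCharge b = onesBelow b 0 - zerosFrom b 0 := rfl

theorem onesBelow_add_one_of_not (hj : ¬ b j) : onesBelow b (j + 1) = onesBelow b j := by
  unfold onesBelow
  congr 1
  grind

theorem zerosFrom_add_one_of_pos (hj : b j) : zerosFrom b (j + 1) = zerosFrom b j := by
  unfold zerosFrom
  congr 1
  grind

theorem numZerosAbove_eq_zerosFrom (hj : b j) : numZerosAbove b j = zerosFrom b j :=
  zerosFrom_add_one_of_pos hj

theorem onesBelow_eq_zero (h : ∀ i < j, ¬ b i) : onesBelow b j = 0 := by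
  rw [onesBelow, show {i | i < j ∧ b i} = ∅ from
    eq_empty_of_forall_notMem fun i hi => h i hi.1 hi.2, ncard_empty]

theorem zerosFrom_eq_zero (h : ∀ i, j ≤ i → b i) : zerosFrom b j = 0 := by
  rw [zerosFrom, show {i | j ≤ i ∧ ¬ b i} = ∅ from
    eq_empty_of_forall_notMem fun i hi => hi.2 (h i hi.1), ncard_empty]

theorem esShape_eq_ncard (b : ℤ → Prop) (k : ℕ) :
    esShape b k = {j | b j ∧ k < zerosFrom b j}.ncard :=
  Nat.card_congr <| Equiv.subtypeEquivRight fun _ =>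
    and_congr_right fun hj => by rw [numZerosAbove_eq_zerosFrom hj, Nat.succ_le_iff]

theorem numZerosAbove_comp_add_right (b : ℤ → Prop) (c j : ℤ) :
    numZerosAbove (fun i => b (i + c)) j = numZerosAbove b (j + c) :=
  Nat.card_congr <| (Equiv.addRight c).subtypeEquiv fun _ => by simp

theorem esShape_comp_add_right (b : ℤ → Prop) (c : ℤ) :
    esShape (fun i => b (i + c)) = esShape b :=
  funext fun _ => Nat.card_congr <| (Equiv.addRight c).subtypeEquiv fun _ => by
    simp [numZerosAbove_comp_add_right]

end Counting

namespace IsEdgeSeq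

variable {b : ℤ → Prop} {j : ℤ} {k : ℕ}

theorem finite_ones_lt (h : IsEdgeSeq b) (j : ℤ) : {i | i < j ∧ b i}.Finite :=
  finite_setOf_of_eventually_not (h.eventually_not.mono fun _ hi => not_and_of_not_right _ hi)
    ((eventually_ge_atTop j).mono fun _ hi => not_and_of_not_left _ hi.not_gt)

theorem finite_zeros_ge (h : IsEdgeSeq b) (j : ℤ) : {i | j ≤ i ∧ ¬ b i}.Finite :=
  finite_setOf_of_eventually_not
    ((eventually_lt_atBot j).mono fun _ hi => not_and_of_not_left _ hi.not_ge)
    (h.eventually.mono fun _ hi => not_and_of_not_right _ (not_not_intro hi))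

theorem eventually_onesBelow_eq_zero (h : IsEdgeSeq b) : ∀ᶠ j in atBot, onesBelow b j = 0 :=
  (eventually_forall_le_atBot.2 h.eventually_not).mono fun _ hj =>
    onesBelow_eq_zero fun i hi => hj i hi.le

theorem eventually_zerosFrom_eq_zero (h : IsEdgeSeq b) : ∀ᶠ j in atTop, zerosFrom b j = 0 :=
  (eventually_forall_ge_atTop.2 h.eventually).mono fun _ => zerosFrom_eq_zero

theorem onesBelow_add_one_of_pos (h : IsEdgeSeq b) (hj : b j) :
    onesBelow b (j + 1) = onesBelow b j + 1 := by
  rw [onesBelow, onesBelow, ← ncard_insert_of_notMem (a := j) (by simp) (h.finite_ones_lt j)]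
  congr 1
  grind

theorem zerosFrom_eq_add_one_of_not (h : IsEdgeSeq b) (hj : ¬ b j) :
    zerosFrom b j = zerosFrom b (j + 1) + 1 := by
  rw [zerosFrom, zerosFrom,
    ← ncard_insert_of_notMem (a := j) (by simp) (h.finite_zeros_ge (j + 1))]
  congr 1
  grind

theorem antitone_zerosFrom (h : IsEdgeSeq b) : Antitone (zerosFrom b) := fun i _ hij =>
  ncard_le_ncard (fun _ hx => ⟨hij.trans hx.1, hx.2⟩) (h.finite_zeros_ge i)

theorem onesBelow_sub_zerosFrom (h : IsEdgeSeq b) (j : ℤ) :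
    (onesBelow b j : ℤ) - zerosFrom b j = esCharge b + j := by
  have hstep (j : ℤ) : (onesBelow b (j + 1) : ℤ) - zerosFrom b (j + 1) =
      onesBelow b j - zerosFrom b j + 1 := by
    by_cases hj : b j
    · rw [h.onesBelow_add_one_of_pos hj, zerosFrom_add_one_of_pos hj]
      lia
    · rw [onesBelow_add_one_of_not hj, h.zerosFrom_eq_add_one_of_not hj]
      lia
  induction j using Int.induction_on with
  | zero => rw [esCharge_eq, add_zero]
  | succ i ih => rw [hstep, ih, add_assoc]
  | pred i ih =>
    have := hstep (-i - 1)
    rw [sub_add_cancel] at this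
    lia

theorem exists_onesBelow_eq (h : IsEdgeSeq b) (k : ℕ) : ∃ p, b p ∧ onesBelow b p = k := by
  have hbdd : ∀ j, onesBelow b j ≤ k → j ≤ k - esCharge b := fun j hj => by
    have := h.onesBelow_sub_zerosFrom j
    lia
  have hne : ∃ j, onesBelow b j ≤ k :=
    h.eventually_onesBelow_eq_zero.exists.imp fun j hj => hj.trans_le k.zero_le
  obtain ⟨p, hpk, hmax⟩ := Int.exists_greatest_of_bdd ⟨_, hbdd⟩ hne
  have hsucc : k < onesBelow b (p + 1) := by
    by_contra! hle
    exact (hmax _ hle).not_gt (lt_add_one p)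
  have hp : b p := by
    by_contra hp
    rw [onesBelow_add_one_of_not hp] at hsucc
    exact hsucc.not_ge hpk
  rw [h.onesBelow_add_one_of_pos hp] at hsucc
  exact ⟨p, hp, by lia⟩

theorem finite_setOf_lt_zerosFrom (h : IsEdgeSeq b) (k : ℕ) :
    {j | b j ∧ k < zerosFrom b j}.Finite :=
  finite_setOf_of_eventually_not (h.eventually_not.mono fun _ hj => not_and_of_not_left _ hj)
    (h.eventually_zerosFrom_eq_zero.mono fun _ hj => not_and_of_not_right _ (by lia))

theorem isPartitionFun_esShape (h : IsEdgeSeq b) : IsPartitionFun (esShape b) := by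
  refine ⟨fun k l hkl => ?_, ?_⟩
  · rw [esShape_eq_ncard, esShape_eq_ncard]
    exact ncard_le_ncard (fun _ hj => ⟨hj.1, hkl.trans_lt hj.2⟩) (h.finite_setOf_lt_zerosFrom k)
  · obtain ⟨N, hN⟩ := eventually_atBot.1 h.eventually_not
    refine ⟨zerosFrom b N, fun k hk => ?_⟩
    rw [esShape_eq_ncard, ncard_eq_zero (h.finite_setOf_lt_zerosFrom k)]
    refine eq_empty_of_forall_notMem fun j ⟨hj, hkj⟩ => ?_
    have hNj : N ≤ j := by
      by_contra! hlt
      exact hN j hlt.le hj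
    exact (hkj.trans_le (h.antitone_zerosFrom hNj)).not_ge hk

theorem onesBelow_lt_esShape_iff (h : IsEdgeSeq b) (hj : b j) :
    onesBelow b j < esShape b k ↔ k < zerosFrom b j := by
  rw [esShape_eq_ncard]
  refine ⟨fun hlt => ?_, fun hk => ?_⟩
  · by_contra! hle
    refine hlt.not_ge (ncard_le_ncard (fun i ⟨hi, hki⟩ => ⟨?_, hi⟩) (h.finite_ones_lt j))
    by_contra! hji
    exact (hki.trans_le (h.antitone_zerosFrom hji)).not_ge hle
  · rw [← Nat.add_one_le_iff, ← h.onesBelow_add_one_of_pos hj]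
    exact ncard_le_ncard
      (fun i hi => ⟨hi.2, hk.trans_le (h.antitone_zerosFrom (Int.lt_add_one_iff.1 hi.1))⟩)
      (h.finite_setOf_lt_zerosFrom k)

theorem esShape_zerosFrom_add_one (h : IsEdgeSeq b) (hj : ¬ b j) :
    esShape b (zerosFrom b (j + 1)) = onesBelow b j := by
  rw [esShape_eq_ncard, onesBelow]
  congr 1
  ext i
  refine ⟨fun ⟨hi, hlt⟩ => ⟨?_, hi⟩, fun ⟨hij, hi⟩ => ⟨hi, ?_⟩⟩
  · by_contra! hji
    have hne : j ≠ i := fun hji => hj (hji ▸ hi)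
    exact hlt.not_ge (h.antitone_zerosFrom (Int.add_one_le_iff.2 (hji.lt_of_ne hne)))
  · rw [← Nat.add_one_le_iff, ← h.zerosFrom_eq_add_one_of_not hj]
    exact h.antitone_zerosFrom hij.le

theorem comp_add_right (h : IsEdgeSeq b) (c : ℤ) : IsEdgeSeq fun i => b (i + c) where
  eventually_not := (tendsto_atBot_add_const_right _ c tendsto_id).eventually h.eventually_not
  eventually := (tendsto_atTop_add_const_right _ c tendsto_id).eventually h.eventually

theorem esCharge_comp_add_right (h : IsEdgeSeq b) (c : ℤ) :
    esCharge (fun i => b (i + c)) = esCharge b + c := by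
  have hones : onesBelow (fun i => b (i + c)) 0 = onesBelow b c :=
    Nat.card_congr <| (Equiv.addRight c).subtypeEquiv fun _ => by simp
  have hzeros : zerosFrom (fun i => b (i + c)) 0 = zerosFrom b c :=
    Nat.card_congr <| (Equiv.addRight c).subtypeEquiv fun _ => by simp
  rw [esCharge_eq, hones, hzeros, h.onesBelow_sub_zerosFrom]

end IsEdgeSeq

section Sorted

theorem isEdgeSeq_sortedSeq (c : ℤ) : IsEdgeSeq (sortedSeq c) where
  eventually_not := (eventually_lt_atBot (-c)).mono fun _ => not_le_of_gt
  eventually := eventually_ge_atTop (-c)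

theorem esCharge_sortedSeq (c : ℤ) : esCharge (sortedSeq c) = c := by
  have h := (isEdgeSeq_sortedSeq c).onesBelow_sub_zerosFrom (-c)
  have hones : onesBelow (sortedSeq c) (-c) = 0 := onesBelow_eq_zero fun _ => not_le_of_gt
  have hzeros : zerosFrom (sortedSeq c) (-c) = 0 := zerosFrom_eq_zero fun _ => id
  lia

theorem sortedSeq_injective : Function.Injective sortedSeq :=
  Function.LeftInverse.injective esCharge_sortedSeq

theorem IsEdgeSeq.eq_sortedSeq_iff {b : ℤ → Prop} (h : IsEdgeSeq b) :
    b = sortedSeq (esCharge b) ↔ ∀ j, b j → b (j + 1) := by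
  refine ⟨fun hb j hj => ?_, fun hstep => ?_⟩
  · rw [hb] at hj ⊢
    exact hj.trans (lt_add_one j).le
  · obtain ⟨N, hN⟩ := eventually_atBot.1 h.eventually_not
    obtain ⟨p, hp, hmin⟩ := Int.exists_least_of_bdd
      ⟨N, fun j hj => (not_le.1 fun hjN => hN j hjN hj).le⟩ h.eventually.exists
    have hsorted : b = sortedSeq (-p) := by
      ext j
      rw [sortedSeq, neg_neg]
      exact ⟨hmin j, fun hpj => Int.leInduction hp (fun i _ => hstep i) j hpj⟩
    rw [hsorted, esCharge_sortedSeq]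

end Sorted

namespace IsPartitionFun

variable {f : ℕ → ℕ} {a k : ℕ} {i : ℤ}

theorem lt_conjCount_iff (hf : IsPartitionFun f) : a < conjCount f (k + 1) ↔ k < f a := by
  obtain ⟨hanti, n, hn⟩ := hf
  have hfin : {i | k < f i}.Finite :=
    (finite_Iio n).subset fun i hi => by
      by_contra hin
      exact (hn i (not_lt.1 hin) ▸ hi : k < 0).not_ge k.zero_le
  change a < {i | k < f i}.ncard ↔ _
  refine ⟨fun hlt => ?_, fun ha => ?_⟩
  · by_contra! hle
    refine hlt.not_ge ((ncard_le_ncard (fun i hi => ?_) (finite_Iio a)).trans_eq (ncard_Iio_nat a))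
    by_contra hia
    exact (hi.trans_le (hanti a i (not_lt.1 hia))).not_ge hle
  · rw [← Nat.succ_le_iff, ← ncard_Iio_nat a.succ]
    exact ncard_le_ncard (fun i hi => ha.trans_le (hanti i a (Nat.lt_succ_iff.1 hi))) hfin

theorem strictMono_onePos (hf : IsPartitionFun f) : StrictMono (onePos f) := by
  refine strictMono_nat_of_lt_succ fun k => ?_
  have hanti : conjCount f (k + 1 + 1) ≤ conjCount f (k + 1) :=
    le_of_forall_lt fun a ha =>
      hf.lt_conjCount_iff.2 ((lt_add_one k).trans (hf.lt_conjCount_iff.1 ha))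
  unfold onePos
  lia

theorem onePos_of_le (hf : IsPartitionFun f) (hk : f 0 ≤ k) : onePos f k = k := by
  have : ¬ 0 < conjCount f (k + 1) := hf.lt_conjCount_iff.not.2 hk.not_gt
  unfold onePos
  lia

theorem edgeOf_of_le (hf : IsPartitionFun f) (hi : f 0 ≤ i) : edgeOf f i := by
  lift i to ℕ using by lia
  exact ⟨i, (hf.onePos_of_le (by lia)).symm⟩

theorem isEdgeSeq_edgeOf (hf : IsPartitionFun f) : IsEdgeSeq (edgeOf f) where
  eventually_not := by
    filter_upwards [eventually_lt_atBot (onePos f 0)]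
    rintro _ hlt ⟨k, rfl⟩
    exact (hf.strictMono_onePos.monotone k.zero_le).not_gt hlt
  eventually := (eventually_ge_atTop _).mono fun _ => hf.edgeOf_of_le

theorem onesBelow_edgeOf (hf : IsPartitionFun f) (k : ℕ) :
    onesBelow (edgeOf f) (onePos f k) = k := by
  have himage : {i | i < onePos f k ∧ edgeOf f i} = onePos f '' Iio k := by
    ext i
    constructor
    · rintro ⟨hlt, l, rfl⟩
      exact ⟨l, hf.strictMono_onePos.lt_iff_lt.1 hlt, rfl⟩
    · rintro ⟨l, hl, rfl⟩
      exact ⟨hf.strictMono_onePos hl, l, rfl⟩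
  rw [onesBelow, himage, ncard_image_of_injective _ hf.strictMono_onePos.injective, ncard_Iio_nat]

theorem esCharge_edgeOf (hf : IsPartitionFun f) : esCharge (edgeOf f) = 0 := by
  have h := hf.isEdgeSeq_edgeOf.onesBelow_sub_zerosFrom (onePos f (f 0))
  rw [hf.onesBelow_edgeOf, hf.onePos_of_le le_rfl, zerosFrom_eq_zero fun _ => hf.edgeOf_of_le] at h
  lia

theorem zerosFrom_edgeOf (hf : IsPartitionFun f) (k : ℕ) :
    zerosFrom (edgeOf f) (onePos f k) = conjCount f (k + 1) := by
  have h := hf.isEdgeSeq_edgeOf.onesBelow_sub_zerosFrom (onePos f k)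
  rw [hf.onesBelow_edgeOf, hf.esCharge_edgeOf, onePos] at h
  rw [onePos]
  lia

theorem esShape_edgeOf (hf : IsPartitionFun f) : esShape (edgeOf f) = f := by
  refine funext fun a => eq_of_forall_lt_iff fun k => ?_
  calc k < esShape (edgeOf f) a
    _ ↔ onesBelow (edgeOf f) (onePos f k) < esShape (edgeOf f) a := by rw [hf.onesBelow_edgeOf]
    _ ↔ a < zerosFrom (edgeOf f) (onePos f k) :=
      hf.isEdgeSeq_edgeOf.onesBelow_lt_esShape_iff ⟨k, rfl⟩
    _ ↔ k < f a := by rw [hf.zerosFrom_edgeOf, hf.lt_conjCount_iff]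

theorem not_edgeOf_iff (hf : IsPartitionFun f) : ¬ edgeOf f i ↔ ∃ a : ℕ, i = f a - a - 1 := by
  constructor
  · intro hi
    have hrow := hf.isEdgeSeq_edgeOf.esShape_zerosFrom_add_one hi
    have hdiff := hf.isEdgeSeq_edgeOf.onesBelow_sub_zerosFrom i
    rw [hf.isEdgeSeq_edgeOf.zerosFrom_eq_add_one_of_not hi, hf.esCharge_edgeOf] at hdiff
    rw [hf.esShape_edgeOf] at hrow
    exact ⟨zerosFrom (edgeOf f) (i + 1), by lia⟩
  · rintro ⟨a, rfl⟩ ⟨k, hk⟩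
    have := hf.lt_conjCount_iff (a := a) (k := k)
    lia

-- A box is given by a `1` (its column) and a `0` further right (its row); the hook length is their
-- distance.
theorem hasHook_iff (hf : IsPartitionFun f) (n : ℕ) :
    HasHook f n ↔ ∃ i, edgeOf f i ∧ ¬ edgeOf f (i + n) := by
  simp_rw [hf.not_edgeOf_iff]
  constructor
  · rintro ⟨a, j, hj, hja, hn⟩
    obtain ⟨k, rfl⟩ := Nat.exists_eq_add_of_le' hj
    have hbox := hf.lt_conjCount_iff.2 hja
    exact ⟨onePos f k, ⟨k, rfl⟩, a, by unfold onePos; lia⟩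
  · rintro ⟨_, ⟨k, rfl⟩, a, ha⟩
    have hbox := hf.lt_conjCount_iff (a := a) (k := k)
    exact ⟨a, k + 1, by lia, by lia, by lia⟩

end IsPartitionFun

namespace IsEdgeSeq

variable {b b' : ℤ → Prop}

theorem conjCount_esShape (h : IsEdgeSeq b) {j : ℤ} (hj : b j) :
    conjCount (esShape b) (onesBelow b j + 1) = zerosFrom b j :=
  eq_of_forall_lt_iff fun _ =>
    h.isPartitionFun_esShape.lt_conjCount_iff.trans (h.onesBelow_lt_esShape_iff hj)

theorem edgeOf_esShape_add_esCharge (h : IsEdgeSeq b) (i : ℤ) :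
    edgeOf (esShape b) (i + esCharge b) ↔ b i := by
  constructor
  · rintro ⟨k, hk⟩
    obtain ⟨p, hp, rfl⟩ := h.exists_onesBelow_eq k
    rw [h.conjCount_esShape hp, h.onesBelow_sub_zerosFrom] at hk
    rwa [show i = p by lia]
  · intro hi
    refine ⟨onesBelow b i, ?_⟩
    rw [h.conjCount_esShape hi, h.onesBelow_sub_zerosFrom, add_comm]

theorem edgeOf_esShape (h : IsEdgeSeq b) (hcharge : esCharge b = 0) :
    edgeOf (esShape b) = b := by
  ext i
  rw [← h.edgeOf_esShape_add_esCharge i, hcharge, add_zero]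

theorem ext_esShape_esCharge (h : IsEdgeSeq b) (h' : IsEdgeSeq b')
    (hshape : esShape b = esShape b') (hcharge : esCharge b = esCharge b') : b = b' := by
  ext i
  rw [← h.edgeOf_esShape_add_esCharge, ← h'.edgeOf_esShape_add_esCharge, hshape, hcharge]

end IsEdgeSeq

theorem IsPartitionFun.exists_isEdgeSeq {f : ℕ → ℕ} (hf : IsPartitionFun f) (c : ℤ) :
    ∃ b, IsEdgeSeq b ∧ esShape b = f ∧ esCharge b = c := by
  refine ⟨fun i => edgeOf f (i + c), hf.isEdgeSeq_edgeOf.comp_add_right c, ?_, ?_⟩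
  · rw [esShape_comp_add_right, hf.esShape_edgeOf]
  · rw [hf.isEdgeSeq_edgeOf.esCharge_comp_add_right, hf.esCharge_edgeOf, zero_add]

/-- The `s`-th runner of the `r`-abacus of an edge sequence. -/
def runner (r : ℕ) (b : ℤ → Prop) (s : Fin r) (j : ℤ) : Prop := b (r * j + (s : ℕ))

/-- The positions of the `r`-abacus: `(s, j)` is the `j`-th position of the `s`-th runner. -/
def abacusEquiv (r : ℕ) [NeZero r] : Fin r × ℤ ≃ ℤ :=
  (Equiv.prodComm _ _).trans (Int.divModEquiv r).symm

/-- The edge sequence with prescribed runners. -/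
def interleave {r : ℕ} [NeZero r] (B : Fin r → ℤ → Prop) (i : ℤ) : Prop :=
  B ((abacusEquiv r).symm i).1 ((abacusEquiv r).symm i).2

/-- The result of pushing all beads to the left in each runner of the `r`-abacus: the edge sequence
of the `r`-core. -/
noncomputable def flush (r : ℕ) [NeZero r] (b : ℤ → Prop) : ℤ → Prop :=
  interleave fun s => sortedSeq (esCharge (runner r b s))

section Abacus

variable {r : ℕ} [NeZero r] {b b' : ℤ → Prop}

theorem abacusEquiv_apply (s : Fin r) (j : ℤ) : abacusEquiv r (s, j) = r * j + (s : ℕ) :=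
  congrArg (· + ((s : ℕ) : ℤ)) (mul_comm j r)

theorem abacusEquiv_symm_snd (i : ℤ) : ((abacusEquiv r).symm i).2 = i / r := rfl

theorem abacusEquiv_symm_fst (i : ℤ) : ((((abacusEquiv r).symm i).1 : ℕ) : ℤ) = i % r := by
  have h := abacusEquiv_apply ((abacusEquiv r).symm i).1 ((abacusEquiv r).symm i).2
  rw [Prod.mk.eta, Equiv.apply_symm_apply, abacusEquiv_symm_snd] at h
  rw [Int.emod_def]
  lia

theorem runner_eq_comp_abacusEquiv (b : ℤ → Prop) (s : Fin r) :
    runner r b s = fun j => b (abacusEquiv r (s, j)) := by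
  ext j
  rw [abacusEquiv_apply, runner]

theorem runner_interleave (B : Fin r → ℤ → Prop) : runner r (interleave B) = B := by
  ext s j
  simp only [runner_eq_comp_abacusEquiv, interleave, Equiv.symm_apply_apply]

theorem interleave_runner (b : ℤ → Prop) : interleave (runner r b) = b := by
  ext i
  simp only [runner_eq_comp_abacusEquiv, interleave, Prod.mk.eta, Equiv.apply_symm_apply]

theorem runner_injective : Function.Injective (runner r) :=
  Function.LeftInverse.injective interleave_runner

theorem interleave_injective :
    Function.Injective (interleave : (Fin r → ℤ → Prop) → ℤ → Prop) :=
  Function.LeftInverse.injective runner_interleave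

theorem IsEdgeSeq.isEdgeSeq_runner (h : IsEdgeSeq b) (s : Fin r) : IsEdgeSeq (runner r b s) := by
  have hr : (0 : ℤ) < r := mod_cast NeZero.pos r
  have htop : Tendsto (fun j : ℤ => r * j) atTop atTop := tendsto_id.const_mul_atTop' hr
  have hbot : Tendsto (fun j : ℤ => r * j) atBot atBot := tendsto_neg_atTop_iff.1 <| by
    simpa only [Function.comp_def, mul_neg, neg_neg] using htop.comp tendsto_neg_atBot_atTop
  exact ⟨(tendsto_atBot_add_const_right _ _ hbot).eventually h.eventually_not,
    (tendsto_atTop_add_const_right _ _ htop).eventually h.eventually⟩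

theorem isEdgeSeq_interleave {B : Fin r → ℤ → Prop} (hB : ∀ s, IsEdgeSeq (B s)) :
    IsEdgeSeq (interleave B) := by
  have hr : (0 : ℤ) < r := mod_cast NeZero.pos r
  have hbot : Tendsto (fun i : ℤ => i / r) atBot atBot := tendsto_atBot.2 fun N =>
    (eventually_le_atBot (N * r)).mono fun i hi => Int.ediv_le_of_le_mul hr hi
  have htop : Tendsto (fun i : ℤ => i / r) atTop atTop := tendsto_atTop.2 fun N =>
    (eventually_ge_atTop (N * r)).mono fun i hi => (Int.le_ediv_iff_mul_le hr).2 hi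
  exact ⟨(hbot.eventually (eventually_all.2 fun s => (hB s).eventually_not)).mono fun _ hi => hi _,
    (htop.eventually (eventually_all.2 fun s => (hB s).eventually)).mono fun _ hi => hi _⟩

theorem card_subtype_eq_sum_runner {P : ℤ → Prop} (hP : {i | P i}.Finite) :
    Nat.card {i // P i} = ∑ s : Fin r, Nat.card {j // runner r P s j} := by
  simp only [runner_eq_comp_abacusEquiv]
  have hfin (s : Fin r) : Finite {j // P (abacusEquiv r (s, j))} :=
    hP.preimage ((abacusEquiv r).injective.comp (Prod.mk_right_injective s)).injOn
  rw [← Nat.card_sigma]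
  exact Nat.card_congr <| ((abacusEquiv r).subtypeEquivOfSubtype (p := P)).symm.trans
    (Equiv.subtypeProdEquivSigmaSubtype fun s j => P (abacusEquiv r (s, j)))

theorem IsEdgeSeq.esCharge_eq_sum_runner (h : IsEdgeSeq b) :
    esCharge b = ∑ s : Fin r, esCharge (runner r b s) := by
  have hneg (s : Fin r) (j : ℤ) : (r : ℤ) * j + (s : ℕ) < 0 ↔ j < 0 := by
    rw [← abacusEquiv_apply, ← not_le, ← not_le,
      ← Int.ediv_nonneg_iff_of_pos (b := r) (mod_cast NeZero.pos r), ← abacusEquiv_symm_snd,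
      Equiv.symm_apply_apply]
  unfold esCharge
  rw [card_subtype_eq_sum_runner (r := r) (h.finite_ones_lt 0),
    card_subtype_eq_sum_runner (r := r) (h.finite_zeros_ge 0), Finset.sum_sub_distrib]
  simp only [runner, Nat.cast_sum, ← not_lt, hneg]

theorem runner_flush (b : ℤ → Prop) (s : Fin r) :
    runner r (flush r b) s = sortedSeq (esCharge (runner r b s)) :=
  congrFun (runner_interleave _) s

theorem flush_eq_flush_iff :
    flush r b = flush r b' ↔ ∀ s, esCharge (runner r b s) = esCharge (runner r b' s) :=
  interleave_injective.eq_iff.trans <|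
    funext_iff.trans <| forall_congr' fun _ => sortedSeq_injective.eq_iff

theorem flush_flush (b : ℤ → Prop) : flush r (flush r b) = flush r b :=
  flush_eq_flush_iff.2 fun s => by rw [runner_flush, esCharge_sortedSeq]

theorem isEdgeSeq_flush (b : ℤ → Prop) : IsEdgeSeq (flush r b) :=
  isEdgeSeq_interleave fun _ => isEdgeSeq_sortedSeq _

theorem IsEdgeSeq.esCharge_flush (h : IsEdgeSeq b) : esCharge (flush r b) = esCharge b := by
  rw [(isEdgeSeq_flush b).esCharge_eq_sum_runner (r := r), h.esCharge_eq_sum_runner (r := r)]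
  simp only [runner_flush, esCharge_sortedSeq]

theorem IsEdgeSeq.flush_eq_self_iff (h : IsEdgeSeq b) :
    flush r b = b ↔ ∀ i, b i → b (i + r) := by
  calc flush r b = b
    _ ↔ ∀ s, runner r b s = sortedSeq (esCharge (runner r b s)) := by
      rw [← (runner_injective (r := r)).eq_iff (a := flush r b), funext_iff]
      simp only [runner_flush, eq_comm]
    _ ↔ ∀ s j, runner r b s j → runner r b s (j + 1) :=
      forall_congr' fun s => (h.isEdgeSeq_runner s).eq_sortedSeq_iff
    _ ↔ ∀ i, b i → b (i + r) := by
      rw [← (abacusEquiv r).forall_congr_right, Prod.forall]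
      simp only [runner, abacusEquiv_apply, mul_add, mul_one, add_right_comm]

theorem IsEdgeSeq.ext_flush_runner (h : IsEdgeSeq b) (h' : IsEdgeSeq b')
    (hflush : flush r b = flush r b')
    (hshape : ∀ s, esShape (runner r b s) = esShape (runner r b' s)) : b = b' :=
  runner_injective <| funext fun s =>
    (h.isEdgeSeq_runner s).ext_esShape_esCharge (h'.isEdgeSeq_runner s) (hshape s)
      (flush_eq_flush_iff.1 hflush s)

theorem exists_isEdgeSeq_flush_eq (b : ℤ → Prop) {q : Fin r → ℕ → ℕ}
    (hq : ∀ s, IsPartitionFun (q s)) :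
    ∃ b', IsEdgeSeq b' ∧ flush r b' = flush r b ∧ ∀ s, esShape (runner r b' s) = q s := by
  choose B hB hshape hcharge using fun s => (hq s).exists_isEdgeSeq (esCharge (runner r b s))
  refine ⟨interleave B, isEdgeSeq_interleave hB, flush_eq_flush_iff.2 fun s => ?_, fun s => ?_⟩
  · rw [runner_interleave, hcharge]
  · rw [runner_interleave, hshape]

end Abacus

section CoreQuotient

variable {r : ℕ} [NeZero r] {f : ℕ → ℕ}

theorem quotFun_eq (r : ℕ) (f : ℕ → ℕ) (s : Fin r) :
    quotFun r f s = esShape (runner r (edgeOf f) s) := rfl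

theorem coreFun_eq (f : ℕ → ℕ) : coreFun r f = esShape (flush r (edgeOf f)) := by
  refine congrArg esShape (funext fun i => ?_)
  have hrunner : runner r (edgeOf f) ((abacusEquiv r).symm i).1 =
      fun j => edgeOf f (r * j + i % r) := by
    ext j
    rw [runner, abacusEquiv_symm_fst]
  simp only [flush, interleave, sortedSeq, hrunner, abacusEquiv_symm_snd]
  rfl

theorem isPartitionFun_coreFun (f : ℕ → ℕ) : IsPartitionFun (coreFun r f) :=
  coreFun_eq (r := r) f ▸ (isEdgeSeq_flush _).isPartitionFun_esShape

theorem IsPartitionFun.isPartitionFun_quotFun (hf : IsPartitionFun f) (s : Fin r) :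
    IsPartitionFun (quotFun r f s) :=
  (hf.isEdgeSeq_edgeOf.isEdgeSeq_runner s).isPartitionFun_esShape

theorem IsPartitionFun.edgeOf_coreFun (hf : IsPartitionFun f) :
    edgeOf (coreFun r f) = flush r (edgeOf f) := by
  rw [coreFun_eq, (isEdgeSeq_flush _).edgeOf_esShape]
  rw [hf.isEdgeSeq_edgeOf.esCharge_flush, hf.esCharge_edgeOf]

theorem IsPartitionFun.not_hasHook_iff (hf : IsPartitionFun f) :
    ¬ HasHook f r ↔ flush r (edgeOf f) = edgeOf f := by
  rw [hf.hasHook_iff, hf.isEdgeSeq_edgeOf.flush_eq_self_iff]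
  push Not
  rfl

theorem IsPartitionFun.not_hasHook_coreFun (hf : IsPartitionFun f) :
    ¬ HasHook (coreFun r f) r := by
  rw [(isPartitionFun_coreFun f).not_hasHook_iff, hf.edgeOf_coreFun, flush_flush]

theorem IsPartitionFun.ext_coreFun_quotFun {g : ℕ → ℕ} (hf : IsPartitionFun f)
    (hg : IsPartitionFun g) (hcore : coreFun r f = coreFun r g)
    (hquot : quotFun r f = quotFun r g) : f = g := by
  have hflush : flush r (edgeOf f) = flush r (edgeOf g) := by
    rw [← hf.edgeOf_coreFun, ← hg.edgeOf_coreFun, hcore]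
  have hedge : edgeOf f = edgeOf g :=
    hf.isEdgeSeq_edgeOf.ext_flush_runner hg.isEdgeSeq_edgeOf hflush (congrFun hquot)
  rw [← hf.esShape_edgeOf, hedge, hg.esShape_edgeOf]

theorem IsPartitionFun.exists_coreFun_quotFun_eq {g : ℕ → ℕ} (hg : IsPartitionFun g)
    (hcore : ¬ HasHook g r) {q : Fin r → ℕ → ℕ} (hq : ∀ s, IsPartitionFun (q s)) :
    ∃ f, IsPartitionFun f ∧ coreFun r f = g ∧ quotFun r f = q := by
  obtain ⟨b, hb, hflush, hshape⟩ := exists_isEdgeSeq_flush_eq (edgeOf g) hq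
  rw [hg.not_hasHook_iff.1 hcore] at hflush
  have hedge : edgeOf (esShape b) = b :=
    hb.edgeOf_esShape (by rw [← hb.esCharge_flush (r := r), hflush, hg.esCharge_edgeOf])
  refine ⟨esShape b, hb.isPartitionFun_esShape, ?_, funext fun s => ?_⟩
  · rw [coreFun_eq, hedge, hflush, hg.esShape_edgeOf]
  · rw [quotFun_eq, hedge, hshape]

end CoreQuotient

end

/-- The combined core-quotient map `λ ↦ (core_r λ, quot_r λ)` is a
bijection from the set of all partitions onto
`(set of r-cores) × (set of r-tuples of partitions)`. -/
theorem stmt4 (r : ℕ) (hr : 1 ≤ r) :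
    Set.BijOn (fun f : ℕ → ℕ => (coreFun r f, quotFun r f))
      {f : ℕ → ℕ | IsPartitionFun f}
      {p : (ℕ → ℕ) × (Fin r → ℕ → ℕ) |
        IsPartitionFun p.1 ∧ ¬ HasHook p.1 r ∧ ∀ s : Fin r, IsPartitionFun (p.2 s)} := by
  have : NeZero r := .of_pos hr
  refine ⟨fun f hf => ?_, fun f hf g hg hfg => ?_, fun ⟨g, q⟩ ⟨hg, hcore, hq⟩ => ?_⟩
  · exact ⟨isPartitionFun_coreFun f, IsPartitionFun.not_hasHook_coreFun hf,
      IsPartitionFun.isPartitionFun_quotFun hf⟩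
  · obtain ⟨hcore, hquot⟩ := Prod.mk.inj hfg
    exact IsPartitionFun.ext_coreFun_quotFun hf hg hcore hquot
  · obtain ⟨f, hf, hfg, hfq⟩ := IsPartitionFun.exists_coreFun_quotFun_eq hg hcore hq
    exact ⟨f, hf, Prod.ext hfg hfq⟩
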